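/- Let d ≥ 1, s ∈ (0,1), let Ω ⊂ ℝ^d be open and bounded, and let O ⊂ ℝ^d be open and bounded. Then there exists a constant C > 0, depending only on d, s, Ω and O, such that for every φ ∈ C_c^∞(Ω): ‖I_{1-s} φ‖_{L²(O)} + ‖∇(I_{1-s} φ)‖_{L²(O; ℝ^d)} ≤ C ( ‖φ‖_{L²(ℝ^d)} + ‖∇^s φ‖_{L²(ℝ^d; ℝ^d)} ). (Continuity of the Riesz potential from H^s_0(Ω) into H^1_loc(ℝ^d), stated on the dense subspace C_c^∞(Ω).) -/

import Mathlib

open MeasureTheory Filter Topology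

noncomputable section

/-- The normalising constant `μ_s` of the Riesz fractional operators. -/
def muS (d : ℕ) (s : ℝ) : ℝ :=
  2 ^ s * Real.pi ^ (-(d : ℝ) / 2) * Real.Gamma (((d : ℝ) + s + 1) / 2) /
    Real.Gamma ((1 - s) / 2)

/-- The Riesz fractional gradient `∇^s u (x)`. -/
def fracGrad (d : ℕ) (s : ℝ) (u : EuclideanSpace ℝ (Fin d) → ℝ)
    (x : EuclideanSpace ℝ (Fin d)) : EuclideanSpace ℝ (Fin d) :=
  muS d s • ∫ y, (‖x - y‖ ^ ((d : ℝ) + s + 1))⁻¹ • ((u x - u y) • (x - y))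

/-- The Riesz potential `I_α f (x)`. -/
def rieszPot (d : ℕ) (α : ℝ) (f : EuclideanSpace ℝ (Fin d) → ℝ)
    (x : EuclideanSpace ℝ (Fin d)) : ℝ :=
  (muS d (1 - α) / ((d : ℝ) - α)) * ∫ y, f y / ‖x - y‖ ^ ((d : ℝ) - α)

lemma kern_integrableOn_ball (d : ℕ) (hd : 1 ≤ d) (p : ℝ) (hp : p < d) (r : ℝ) :
    IntegrableOn (fun z : EuclideanSpace ℝ (Fin d) => (‖z‖ ^ p)⁻¹) (Metric.ball 0 r) := by
  refine integrableOn_ball_of_norm_le_rpow (C := 1) (α := p) (by simpa using hd) (by simpa using hp)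
    (Eventually.of_forall fun z => ?_) (Measurable.aestronglyMeasurable (by fun_prop))
  rw [Real.norm_of_nonneg (by positivity), Real.rpow_neg (norm_nonneg _), one_mul]

lemma kern_locallyIntegrable (d : ℕ) (hd : 1 ≤ d) (p : ℝ) (hp : p < d) :
    LocallyIntegrable (fun z : EuclideanSpace ℝ (Fin d) => (‖z‖ ^ p)⁻¹) := by
  rw [locallyIntegrable_iff]
  intro K hK
  obtain ⟨r, hr⟩ := hK.isBounded.subset_ball 0
  exact (kern_integrableOn_ball d hd p hp r).mono_set hr

/-- The majorant of the singular integral. -/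
lemma majorant_integrable (d : ℕ) (hd : 1 ≤ d) (s : ℝ) (hs : s ∈ Set.Ioo (0 : ℝ) 1) :
    Integrable (fun z : EuclideanSpace ℝ (Fin d) => min ‖z‖ 1 * (‖z‖ ^ ((d : ℝ) + s))⁻¹) := by
  have hm : AEStronglyMeasurable
      (fun z : EuclideanSpace ℝ (Fin d) => min ‖z‖ 1 * (‖z‖ ^ ((d : ℝ) + s))⁻¹) volume :=
    Measurable.aestronglyMeasurable (by fun_prop)
  rw [← integrableOn_univ, ← Set.union_compl_self (Metric.ball (0 : EuclideanSpace ℝ (Fin d)) 1)]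
  refine IntegrableOn.union ?_ ?_
  · refine integrableOn_ball_of_norm_le_rpow (C := 1) (α := (d : ℝ) + s - 1) (by simpa using hd)
      (by simp; linarith [hs.2]) (Eventually.of_forall fun z => ?_) hm
    rw [Real.norm_of_nonneg (by positivity), one_mul]
    rcases eq_or_ne z 0 with rfl | hz
    · simp only [norm_zero]
      rw [min_eq_left zero_le_one, zero_mul]
      positivity
    · have hz' : 0 < ‖z‖ := norm_pos_iff.2 hz
      have : -((d : ℝ) + s - 1) = 1 + -((d : ℝ) + s) := by ring
      rw [this, Real.rpow_add hz' 1, Real.rpow_one, Real.rpow_neg hz'.le]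
      gcongr
      exact min_le_left _ _
  · have h1 := (integrable_one_add_norm (E := EuclideanSpace ℝ (Fin d)) (μ := volume)
      (r := (d : ℝ) + s) (by simpa using hs.1)).const_mul (2 ^ ((d : ℝ) + s))
    refine Integrable.mono' h1.integrableOn hm.restrict ?_
    filter_upwards [ae_restrict_mem Metric.isOpen_ball.measurableSet.compl] with z hz
    have hz1 : 1 ≤ ‖z‖ := by simpa using hz
    have hq : 0 < (d : ℝ) + s := by have := hs.1; positivity
    rw [Real.norm_of_nonneg (by positivity), min_eq_right hz1, one_mul,
      Real.rpow_neg (by positivity), ← div_eq_mul_inv,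
      ← Real.div_rpow (by positivity) (by positivity), ← Real.inv_rpow (by positivity)]
    refine Real.rpow_le_rpow (by positivity) ?_ hq.le
    rw [inv_eq_one_div, div_le_div_iff₀ (by positivity) (by positivity)]
    linarith

lemma reg_hasFDerivAt (d : ℕ) (p e : ℝ) (he : 0 < e) (z : EuclideanSpace ℝ (Fin d)) :
    HasFDerivAt (fun z : EuclideanSpace ℝ (Fin d) => (e + ‖z‖ ^ 2) ^ (-p / 2))
      ((-p * (e + ‖z‖ ^ 2) ^ (-p / 2 - 1)) • innerSL ℝ z) z := by
  have h1 : HasFDerivAt (fun z : EuclideanSpace ℝ (Fin d) => e + ‖z‖ ^ 2) (2 • innerSL ℝ z) z :=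
    ((hasStrictFDerivAt_norm_sq z).hasFDerivAt).const_add e
  have h2 := h1.rpow_const (p := -p / 2) (Or.inl (by positivity))
  have h3 : ((-p * (e + ‖z‖ ^ 2) ^ (-p / 2 - 1)) • innerSL ℝ z) =
      (-p / 2 * (e + ‖z‖ ^ 2) ^ (-p / 2 - 1)) • 2 • (innerSL ℝ) z := by
    ext v
    simp only [smul_apply, smul_eq_mul, nsmul_eq_mul, Nat.cast_ofNat]
    ring
  rw [h3]
  exact h2

lemma reg_grad_integrable (d : ℕ) (s : ℝ) (hs : s ∈ Set.Ioo (0 : ℝ) 1) (e : ℝ) (he : 0 < e)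
    (he1 : e ≤ 1) (v : EuclideanSpace ℝ (Fin d)) :
    Integrable (fun z : EuclideanSpace ℝ (Fin d) =>
      (e + ‖z‖ ^ 2) ^ (-((d : ℝ) - (1 - s)) / 2 - 1) * inner ℝ z v) := by
  have h1 := (integrable_rpow_neg_one_add_norm_sq (E := EuclideanSpace ℝ (Fin d)) (μ := volume)
      (r := (d : ℝ) + s) (by simpa using hs.1)).const_mul (e ^ (-((d : ℝ) + s) / 2) * ‖v‖)
  refine h1.mono' (Measurable.aestronglyMeasurable (by fun_prop)) (Eventually.of_forall fun z => ?_)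
  have hA : 0 < e + ‖z‖ ^ 2 := by positivity
  rw [norm_mul, Real.norm_of_nonneg (by positivity)]
  have h2 : ‖(inner ℝ z v : ℝ)‖ ≤ (e + ‖z‖ ^ 2) ^ ((1 : ℝ) / 2) * ‖v‖ := by
    refine (norm_inner_le_norm _ _).trans ?_
    gcongr
    rw [← Real.sqrt_eq_rpow]
    exact Real.le_sqrt_of_sq_le (by linarith)
  have h3 : (e + ‖z‖ ^ 2) ^ (-((d : ℝ) - (1 - s)) / 2 - 1) * (e + ‖z‖ ^ 2) ^ ((1 : ℝ) / 2)
      = (e + ‖z‖ ^ 2) ^ (-((d : ℝ) + s) / 2) := by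
    rw [← Real.rpow_add hA]; congr 1; ring
  calc _ ≤ (e + ‖z‖ ^ 2) ^ (-((d : ℝ) - (1 - s)) / 2 - 1) *
        ((e + ‖z‖ ^ 2) ^ ((1 : ℝ) / 2) * ‖v‖) := by gcongr
    _ = (e + ‖z‖ ^ 2) ^ (-((d : ℝ) + s) / 2) * ‖v‖ := by rw [← mul_assoc, h3]
    _ ≤ (e * (1 + ‖z‖ ^ 2)) ^ (-((d : ℝ) + s) / 2) * ‖v‖ := by
      gcongr ?_ * _
      refine Real.rpow_le_rpow_of_nonpos (by positivity) ?_ ?_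
      · nlinarith [sq_nonneg ‖z‖]
      · have := hs.1
        have : (0 : ℝ) ≤ d := by positivity
        linarith
    _ = _ := by rw [Real.mul_rpow (by positivity) (by positivity)]; ring

lemma reg_ibp (d : ℕ) (s : ℝ) (hs : s ∈ Set.Ioo (0 : ℝ) 1) (e : ℝ) (he : 0 < e)
    (he1 : e ≤ 1) (φ : EuclideanSpace ℝ (Fin d) → ℝ) (hφ : ContDiff ℝ 1 φ)
    (hc : HasCompactSupport φ) (x v : EuclideanSpace ℝ (Fin d)) :
    ∫ z, (e + ‖z‖ ^ 2) ^ (-((d : ℝ) - (1 - s)) / 2) * fderiv ℝ φ (x - z) v =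
    ((d : ℝ) - (1 - s)) * ∫ z, (φ x - φ (x - z)) *
      ((e + ‖z‖ ^ 2) ^ (-((d : ℝ) - (1 - s)) / 2 - 1) * inner ℝ z v) := by
  set p := (d : ℝ) - (1 - s) with hp
  set K : EuclideanSpace ℝ (Fin d) → ℝ := fun z => (e + ‖z‖ ^ 2) ^ (-p / 2) with hK
  set G : EuclideanSpace ℝ (Fin d) → ℝ :=
    fun z => (e + ‖z‖ ^ 2) ^ (-p / 2 - 1) * inner ℝ z v with hG
  have hGi : Integrable G := reg_grad_integrable d s hs e he he1 v
  have hKd : ∀ z, fderiv ℝ K z v = -p * G z := fun z => by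
    rw [(reg_hasFDerivAt d p e he z).fderiv]
    simp [hG]; ring
  have hφd : Differentiable ℝ φ := hφ.differentiable one_ne_zero
  have hgd : ∀ z, fderiv ℝ (fun z => φ (x - z)) z v = - fderiv ℝ φ (x - z) v := fun z => by
    have h := ((hφd (x - z)).hasFDerivAt).comp z ((hasFDerivAt_id z).const_sub x)
    have h' : HasFDerivAt (fun z => φ (x - z)) _ z := h
    rw [h'.fderiv]; simp
  have hAc : ∀ z : EuclideanSpace ℝ (Fin d), e + ‖z‖ ^ 2 ≠ 0 := fun z => by positivity
  have hKc : Continuous K := by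
    refine Continuous.rpow_const (by fun_prop) fun z => Or.inl (hAc z)
  have hGc : Continuous G := by
    refine Continuous.mul (Continuous.rpow_const (by fun_prop) fun z => Or.inl (hAc z)) (by fun_prop)
  have hcx : HasCompactSupport (fun z => φ (x - z)) := hc.comp_homeomorph (Homeomorph.subLeft x)
  have hφc : Continuous (fun z => φ (x - z)) := hφ.continuous.comp (by fun_prop)
  have hf'c : Continuous (fun z => fderiv ℝ φ (x - z) v) :=
    ((hφ.continuous_fderiv one_ne_zero).clm_apply continuous_const).comp
      (continuous_const.sub continuous_id)
  have hcx' : HasCompactSupport (fun z => fderiv ℝ φ (x - z) v) :=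
    (hc.fderiv_apply ℝ v).comp_homeomorph (Homeomorph.subLeft x)
  have hodd : ∫ z, G z = 0 := by
    have h := integral_neg_eq_self G volume
    have h2 : ∀ z, G (-z) = - G z := fun z => by simp [hG]
    simp_rw [h2, integral_neg] at h
    linarith
  have hGφ : Integrable (fun z => G z * φ (x - z)) :=
    (hGc.mul hφc).integrable_of_hasCompactSupport hcx.mul_left
  have key := integral_mul_fderiv_eq_neg_fderiv_mul_of_integrable (μ := volume) (f := K)
    (g := fun z => φ (x - z)) (v := v) ?_ ?_ ?_ ?_ ?_
  · simp_rw [hKd, hgd] at key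
    have e1 : ∫ z, K z * -(fderiv ℝ φ (x - z)) v = - ∫ z, K z * fderiv ℝ φ (x - z) v := by
      rw [← integral_neg]; simp
    have e2 : ∫ z, -p * G z * φ (x - z) = -p * ∫ z, G z * φ (x - z) := by
      rw [← integral_const_mul]; simp only [mul_assoc]
    have e3 : ∫ z, (φ x - φ (x - z)) * G z = φ x * (∫ z, G z) - ∫ z, G z * φ (x - z) := by
      rw [← integral_const_mul, ← integral_sub (hGi.const_mul _) hGφ]
      congr 1; ext z; ring
    rw [e3, hodd]
    rw [e1, e2] at key
    show ∫ z, K z * fderiv ℝ φ (x - z) v = _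
    linarith
  · simp_rw [hKd, mul_assoc]
    exact hGφ.const_mul _
  · simp_rw [hgd, mul_neg]
    exact ((hKc.mul hf'c).integrable_of_hasCompactSupport hcx'.mul_left).neg
  · exact (hKc.mul hφc).integrable_of_hasCompactSupport hcx.mul_left
  · intro z _; exact (reg_hasFDerivAt d p e he z).differentiableAt
  · intro z _; exact (hφd _).comp z (by fun_prop)

lemma diff_bound (d : ℕ) (φ : EuclideanSpace ℝ (Fin d) → ℝ) (hφ : ContDiff ℝ 1 φ)
    (hc : HasCompactSupport φ) :
    ∃ A : ℝ, 0 ≤ A ∧ ∀ x z, |φ x - φ (x - z)| ≤ A * min ‖z‖ 1 := by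
  obtain ⟨M, hM⟩ := hc.exists_bound_of_continuous hφ.continuous
  obtain ⟨N, hN⟩ := hφ.lipschitzWith_of_hasCompactSupport hc one_ne_zero
  have hM0 : 0 ≤ M := (norm_nonneg _).trans (hM 0)
  refine ⟨max N (2 * M), by positivity, fun x z => ?_⟩
  rcases le_total ‖z‖ 1 with h | h
  · rw [min_eq_left h]
    have := hN.dist_le_mul x (x - z)
    rw [Real.dist_eq, dist_eq_norm, sub_sub_cancel] at this
    exact this.trans (by gcongr; exact le_max_left _ _)
  · rw [min_eq_right h, mul_one]
    refine le_trans ?_ (le_max_right _ _)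
    have h1 := hM x
    have h2 := hM (x - z)
    rw [Real.norm_eq_abs] at h1 h2
    exact (abs_sub _ _).trans (by linarith)

lemma sing_bound (d : ℕ) (s : ℝ) (hs : s ∈ Set.Ioo (0 : ℝ) 1) (A a : ℝ)
    (z v : EuclideanSpace ℝ (Fin d)) (ha : |a| ≤ A * min ‖z‖ 1) (e : ℝ) (he : 0 ≤ e)
    (hA : 0 ≤ A) :
    ‖a * ((e + ‖z‖ ^ 2) ^ (-((d : ℝ) - (1 - s)) / 2 - 1) * inner ℝ z v)‖ ≤
      A * ‖v‖ * (min ‖z‖ 1 * (‖z‖ ^ ((d : ℝ) + s))⁻¹) := by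
  rcases eq_or_ne z 0 with rfl | hz
  · simp
  have hz' : 0 < ‖z‖ := norm_pos_iff.2 hz
  have h0 := hs.1
  have hd : (0 : ℝ) ≤ d := by positivity
  rw [norm_mul, norm_mul, Real.norm_eq_abs a, Real.norm_of_nonneg (by positivity)]
  have h1 : (e + ‖z‖ ^ 2) ^ (-((d : ℝ) - (1 - s)) / 2 - 1) ≤ (‖z‖ ^ ((d : ℝ) + s + 1))⁻¹ := by
    calc _ ≤ (‖z‖ ^ 2) ^ (-((d : ℝ) - (1 - s)) / 2 - 1) :=
          Real.rpow_le_rpow_of_nonpos (by positivity) (by linarith) (by linarith)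
      _ = _ := by
        rw [← Real.rpow_natCast, ← Real.rpow_mul hz'.le, ← Real.rpow_neg hz'.le]
        congr 1; push_cast; ring
  calc _ ≤ (A * min ‖z‖ 1) * ((‖z‖ ^ ((d : ℝ) + s + 1))⁻¹ * (‖z‖ * ‖v‖)) := by
        gcongr
        exact norm_inner_le_norm _ _
    _ = _ := by
        rw [Real.rpow_add hz' _ 1, Real.rpow_one]
        field_simp

lemma sing_identity (d : ℕ) (hd : 1 ≤ d) (s : ℝ) (hs : s ∈ Set.Ioo (0 : ℝ) 1)
    (φ : EuclideanSpace ℝ (Fin d) → ℝ) (hφ : ContDiff ℝ 1 φ)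
    (hc : HasCompactSupport φ) (x v : EuclideanSpace ℝ (Fin d)) :
    ∫ z, (‖z‖ ^ ((d : ℝ) - (1 - s)))⁻¹ * fderiv ℝ φ (x - z) v =
    ((d : ℝ) - (1 - s)) * ∫ z, (φ x - φ (x - z)) *
      ((‖z‖ ^ ((d : ℝ) + s + 1))⁻¹ * inner ℝ z v) := by
  have : Nontrivial (EuclideanSpace ℝ (Fin d)) :=
    Module.nontrivial_of_finrank_pos (R := ℝ) (by simp; omega)
  have hd1 : (1 : ℝ) ≤ d := by exact_mod_cast hd
  have hs0 := hs.1
  have hne : ∀ᵐ z : EuclideanSpace ℝ (Fin d), z ≠ 0 := by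
    rw [ae_iff]; simp
  let e : ℕ → ℝ := fun n => 1 / ((n : ℝ) + 1)
  have he : ∀ n, 0 < e n := fun n => by positivity
  have he1 : ∀ n, e n ≤ 1 := fun n => by
    refine div_le_one_of_le₀ ?_ (by positivity)
    have : (0 : ℝ) ≤ n := by positivity
    linarith
  have het : Tendsto e atTop (𝓝 0) := tendsto_one_div_add_atTop_nhds_zero_nat
  have hlim : ∀ (q : ℝ) (z : EuclideanSpace ℝ (Fin d)), z ≠ 0 →
      Tendsto (fun n => (e n + ‖z‖ ^ 2) ^ (-q / 2)) atTop (𝓝 ((‖z‖ ^ q)⁻¹)) := fun q z hz => by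
    have hz' : 0 < ‖z‖ := norm_pos_iff.2 hz
    have h1 : Tendsto (fun n => e n + ‖z‖ ^ 2) atTop (𝓝 (0 + ‖z‖ ^ 2)) := het.add_const _
    have h2 := h1.rpow_const (p := -q / 2) (Or.inl (by positivity))
    convert h2 using 2
    rw [zero_add, ← Real.rpow_natCast, ← Real.rpow_mul hz'.le, ← Real.rpow_neg hz'.le]
    congr 1; push_cast; ring
  have hf'c : Continuous (fun z => fderiv ℝ φ z v) :=
    (hφ.continuous_fderiv one_ne_zero).clm_apply continuous_const
  have hcx' : HasCompactSupport (fun z => fderiv ℝ φ z v) := hc.fderiv_apply ℝ v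
  have hint : Integrable (fun z => (‖z‖ ^ ((d : ℝ) - (1 - s)))⁻¹ * fderiv ℝ φ (x - z) v) :=
    hcx'.convolutionExists_right (ContinuousLinearMap.mul ℝ ℝ)
      (kern_locallyIntegrable d hd ((d : ℝ) - (1 - s)) (by linarith [hs.2])) hf'c x
  have hm1 : Measurable (fun z => fderiv ℝ φ (x - z) v) :=
    (hf'c.comp (continuous_const.sub continuous_id)).measurable
  have hm2 : Measurable (fun z => φ (x - z)) :=
    (hφ.continuous.comp (continuous_const.sub continuous_id)).measurable
  obtain ⟨A, hA, hAb⟩ := diff_bound d φ hφ hc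
  have T1 : Tendsto (fun n => ∫ z, (e n + ‖z‖ ^ 2) ^ (-((d : ℝ) - (1 - s)) / 2) *
      fderiv ℝ φ (x - z) v) atTop
      (𝓝 (∫ z, (‖z‖ ^ ((d : ℝ) - (1 - s)))⁻¹ * fderiv ℝ φ (x - z) v)) := by
    refine tendsto_integral_of_dominated_convergence _ (fun n => ?_) hint.norm (fun n => ?_) ?_
    · exact Measurable.aestronglyMeasurable (by fun_prop)
    · filter_upwards [hne] with z hz
      have hz' : 0 < ‖z‖ := norm_pos_iff.2 hz
      have hen := he n
      rw [norm_mul, norm_mul]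
      gcongr
      rw [Real.norm_of_nonneg (by positivity), Real.norm_of_nonneg (by positivity)]
      calc _ ≤ (‖z‖ ^ 2) ^ (-((d : ℝ) - (1 - s)) / 2) :=
            Real.rpow_le_rpow_of_nonpos (by positivity) (by linarith) (by linarith)
        _ = _ := by
          rw [← Real.rpow_natCast, ← Real.rpow_mul hz'.le, ← Real.rpow_neg hz'.le]
          congr 1; push_cast; ring
    · filter_upwards [hne] with z hz
      exact (hlim _ z hz).mul_const _
  have T2 : Tendsto (fun n => ∫ z, (φ x - φ (x - z)) *
      ((e n + ‖z‖ ^ 2) ^ (-((d : ℝ) - (1 - s)) / 2 - 1) * inner ℝ z v)) atTop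
      (𝓝 (∫ z, (φ x - φ (x - z)) * ((‖z‖ ^ ((d : ℝ) + s + 1))⁻¹ * inner ℝ z v))) := by
    refine tendsto_integral_of_dominated_convergence
      (fun z => A * ‖v‖ * (min ‖z‖ 1 * (‖z‖ ^ ((d : ℝ) + s))⁻¹)) (fun n => ?_)
      ((majorant_integrable d hd s hs).const_mul _) (fun n => ?_) ?_
    · exact ((measurable_const.sub hm2).mul (Measurable.mul (by fun_prop)
        (by fun_prop))).aestronglyMeasurable
    · exact Eventually.of_forall fun z => sing_bound d s hs A _ z v (hAb x z) (e n) (he n).le hA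
    · filter_upwards [hne] with z hz
      have h := hlim ((d : ℝ) + s + 1) z hz
      have hh : -((d : ℝ) + s + 1) / 2 = -((d : ℝ) - (1 - s)) / 2 - 1 := by ring
      rw [hh] at h
      exact (h.mul_const _).const_mul _
  refine tendsto_nhds_unique T1 ?_
  simp_rw [fun n => reg_ibp d s hs (e n) (he n) (he1 n) φ hφ hc x v]
  exact T2.const_mul _

lemma frac_integrable (d : ℕ) (hd : 1 ≤ d) (s : ℝ) (hs : s ∈ Set.Ioo (0 : ℝ) 1)
    (φ : EuclideanSpace ℝ (Fin d) → ℝ) (hφ : ContDiff ℝ 1 φ)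
    (hc : HasCompactSupport φ) (x : EuclideanSpace ℝ (Fin d)) :
    Integrable (fun y => (‖x - y‖ ^ ((d : ℝ) + s + 1))⁻¹ • ((φ x - φ y) • (x - y))) := by
  obtain ⟨A, hA, hAb⟩ := diff_bound d φ hφ hc
  have h1 := ((majorant_integrable d hd s hs).comp_sub_left x).const_mul A
  have hφm := hφ.continuous.measurable
  refine h1.mono' ?_ (Eventually.of_forall fun y => ?_)
  · have m1 : Measurable (fun y : EuclideanSpace ℝ (Fin d) => (‖x - y‖ ^ ((d : ℝ) + s + 1))⁻¹) := by
      fun_prop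
    have m2 : Measurable (fun y : EuclideanSpace ℝ (Fin d) => x - y) := by fun_prop
    exact (m1.smul ((measurable_const.sub hφm).smul m2)).aestronglyMeasurable
  · rcases eq_or_ne (x - y) 0 with h | h
    · simp only [h, smul_zero, norm_zero]
      simp
    · have hz : 0 < ‖x - y‖ := norm_pos_iff.2 h
      have hb := hAb x (x - y)
      rw [sub_sub_cancel] at hb
      rw [norm_smul, norm_smul, Real.norm_of_nonneg (by positivity), Real.norm_eq_abs]
      calc _ ≤ (‖x - y‖ ^ ((d : ℝ) + s + 1))⁻¹ * ((A * min ‖x - y‖ 1) * ‖x - y‖) := by gcongr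
        _ = _ := by
          rw [Real.rpow_add hz _ 1, Real.rpow_one]
          field_simp

lemma rieszPot_eq_conv (d : ℕ) (s : ℝ) (φ : EuclideanSpace ℝ (Fin d) → ℝ) :
    rieszPot d (1 - s) φ = fun x => (muS d s / ((d : ℝ) - (1 - s))) *
      (convolution (fun z : EuclideanSpace ℝ (Fin d) => (‖z‖ ^ ((d : ℝ) - (1 - s)))⁻¹) φ
        (ContinuousLinearMap.mul ℝ ℝ) volume) x := by
  ext x
  rw [rieszPot, convolution_def, sub_sub_cancel]
  congr 1
  rw [← integral_sub_left_eq_self _ volume x]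
  congr 1
  ext z
  simp [sub_sub_cancel, div_eq_inv_mul]

lemma rieszPot_contDiff (d : ℕ) (hd : 1 ≤ d) (s : ℝ) (hs : s ∈ Set.Ioo (0 : ℝ) 1)
    (φ : EuclideanSpace ℝ (Fin d) → ℝ) (hφ : ContDiff ℝ 1 φ)
    (hc : HasCompactSupport φ) : ContDiff ℝ 1 (rieszPot d (1 - s) φ) := by
  rw [rieszPot_eq_conv]
  exact contDiff_const.mul (HasCompactSupport.contDiff_convolution_right (n := 1) _ hc
    (kern_locallyIntegrable d hd _ (by linarith [hs.2])) hφ)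

lemma rieszPot_gradient (d : ℕ) (hd : 1 ≤ d) (s : ℝ) (hs : s ∈ Set.Ioo (0 : ℝ) 1)
    (φ : EuclideanSpace ℝ (Fin d) → ℝ) (hφ : ContDiff ℝ 1 φ)
    (hc : HasCompactSupport φ) (x : EuclideanSpace ℝ (Fin d)) :
    gradient (rieszPot d (1 - s) φ) x = fracGrad d s φ x := by
  have hk := kern_locallyIntegrable d hd ((d : ℝ) - (1 - s)) (by linarith [hs.2])
  have hd1 : (1 : ℝ) ≤ d := by exact_mod_cast hd
  have hp : (d : ℝ) - (1 - s) ≠ 0 := by have := hs.1; apply ne_of_gt; linarith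
  refine ext_inner_right ℝ fun v => ?_
  have h1 := (hc.hasFDerivAt_convolution_right (ContinuousLinearMap.mul ℝ ℝ) hk hφ x).const_mul
    (muS d s / ((d : ℝ) - (1 - s)))
  rw [gradient, InnerProductSpace.toDual_symm_apply, rieszPot_eq_conv, h1.fderiv,
    smul_apply, convolution_precompR_apply _ hk (hc.fderiv ℝ)
      (hφ.continuous_fderiv one_ne_zero), convolution_def]
  simp only [ContinuousLinearMap.mul_apply']
  rw [sing_identity d hd s hs φ hφ hc x v, fracGrad, inner_smul_left, real_inner_comm,
    ← integral_inner (frac_integrable d hd s hs φ hφ hc x) v, smul_eq_mul, ← mul_assoc,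
    div_mul_cancel₀ _ hp]
  simp only [conj_trivial]
  congr 1
  rw [← integral_sub_left_eq_self _ volume x]
  congr 1
  ext z
  rw [sub_sub_cancel, inner_smul_right, inner_smul_right, real_inner_comm]
  ring

lemma fracGrad_sq_integrable (d : ℕ) (hd : 1 ≤ d) (s : ℝ) (hs : s ∈ Set.Ioo (0 : ℝ) 1)
    (φ : EuclideanSpace ℝ (Fin d) → ℝ) (hφ : ContDiff ℝ 1 φ)
    (hc : HasCompactSupport φ) : Integrable (fun x => ‖fracGrad d s φ x‖ ^ 2) := by
  have hcont : Continuous (fun x => ‖fracGrad d s φ x‖ ^ 2) := by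
    have h : fracGrad d s φ = gradient (rieszPot d (1 - s) φ) :=
      funext fun x => (rieszPot_gradient d hd s hs φ hφ hc x).symm
    rw [h]
    have h2 : Continuous (gradient (rieszPot d (1 - s) φ)) :=
      (InnerProductSpace.toDual ℝ _).symm.continuous.comp
        ((rieszPot_contDiff d hd s hs φ hφ hc).continuous_fderiv one_ne_zero)
    fun_prop
  have hs0 := hs.1
  have hd0 : (1 : ℝ) ≤ d := by exact_mod_cast hd
  have hint := integrable_one_add_norm (E := EuclideanSpace ℝ (Fin d)) (μ := volume)
      (r := 2 * ((d : ℝ) + s)) (by simp; linarith)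
  refine hcont.locallyIntegrable.integrable_of_isBigO_cocompact ?_ (hint.integrableAtFilter _)
  obtain ⟨R, hR⟩ := hc.isCompact.isBounded.subset_ball 0
  set R' := max R 1
  have hφi : Integrable φ := hφ.continuous.integrable_of_hasCompactSupport hc
  set q := (d : ℝ) + s with hq
  have hq0 : 0 < q := by linarith
  set B := |muS d s| * ((4 : ℝ) ^ q * ∫ y, |φ y|) with hB
  have hB0 : 0 ≤ B := mul_nonneg (abs_nonneg _) (mul_nonneg (by positivity)
    (integral_nonneg fun _ => abs_nonneg _))
  refine Asymptotics.IsBigO.of_bound (B ^ 2) ?_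
  have hev : ∀ᶠ x : EuclideanSpace ℝ (Fin d) in cocompact _, 2 * R' < ‖x‖ :=
    (tendsto_norm_cocompact_atTop (E := EuclideanSpace ℝ (Fin d))).eventually_gt_atTop _
  filter_upwards [hev] with x hx
  have hR1 : 1 ≤ R' := le_max_right _ _
  have hsupp : ∀ y, φ y ≠ 0 → ‖y‖ < R' := fun y hy => by
    have := hR (subset_tsupport _ hy)
    rw [mem_ball_zero_iff] at this
    exact this.trans_le (le_max_left _ _)
  have hφx : φ x = 0 := by
    by_contra h
    have := hsupp x h
    linarith
  have hmain : ‖fracGrad d s φ x‖ ≤ B * (1 + ‖x‖) ^ (-q) := by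
    rw [fracGrad, norm_smul, Real.norm_eq_abs, hB, mul_assoc]
    refine mul_le_mul_of_nonneg_left ?_ (abs_nonneg _)
    have h1 : ∀ y, ‖(‖x - y‖ ^ (q + 1))⁻¹ • ((φ x - φ y) • (x - y))‖ ≤
        (4 ^ q * (1 + ‖x‖) ^ (-q)) * |φ y| := fun y => by
      by_cases hy : φ y = 0
      · simp [hy, hφx]
      have hyR := hsupp y hy
      have hxy : (1 + ‖x‖) / 4 ≤ ‖x - y‖ := by
        have := norm_sub_norm_le x y
        linarith
      have hz : 0 < ‖x - y‖ := lt_of_lt_of_le (by positivity) hxy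
      rw [norm_smul, norm_smul, Real.norm_of_nonneg (by positivity), Real.norm_eq_abs, hφx,
        zero_sub, abs_neg]
      have h3 : (‖x - y‖ ^ (q + 1))⁻¹ * ‖x - y‖ = ‖x - y‖ ^ (-q) := by
        rw [Real.rpow_add hz q 1, Real.rpow_one, Real.rpow_neg hz.le]
        field_simp
      calc _ = ((‖x - y‖ ^ (q + 1))⁻¹ * ‖x - y‖) * |φ y| := by ring
        _ = ‖x - y‖ ^ (-q) * |φ y| := by rw [h3]
        _ ≤ ((1 + ‖x‖) / 4) ^ (-q) * |φ y| := by
          gcongr ?_ * _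
          exact Real.rpow_le_rpow_of_nonpos (by positivity) hxy (by linarith)
        _ = _ := by
          rw [Real.div_rpow (by positivity) (by positivity), Real.rpow_neg (by positivity : (0:ℝ) ≤ 4)]
          field_simp
    refine (norm_integral_le_of_norm_le (hφi.abs.const_mul _) (Eventually.of_forall h1)).trans ?_
    rw [integral_const_mul]
    apply le_of_eq; ring
  rw [Real.norm_of_nonneg (by positivity), Real.norm_of_nonneg (by positivity)]
  calc _ ≤ (B * (1 + ‖x‖) ^ (-q)) ^ 2 := by gcongr
    _ = _ := by
      rw [mul_pow, ← Real.rpow_natCast ((1 + ‖x‖) ^ (-q)) 2, ← Real.rpow_mul (by positivity)]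
      congr 2; push_cast; ring

lemma rieszPot_L2 (d : ℕ) (hd : 1 ≤ d) (s : ℝ) (hs : s ∈ Set.Ioo (0 : ℝ) 1)
    (Ω O : Set (EuclideanSpace ℝ (Fin d)))
    (hΩb : Bornology.IsBounded Ω) (hOo : IsOpen O) (hOb : Bornology.IsBounded O) :
    ∃ C : ℝ, 0 ≤ C ∧ ∀ φ : EuclideanSpace ℝ (Fin d) → ℝ, Continuous φ → HasCompactSupport φ →
      tsupport φ ⊆ Ω →
      ∫ x in O, (rieszPot d (1 - s) φ x) ^ 2 ≤ C ^ 2 * ∫ x, (φ x) ^ 2 := by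
  obtain ⟨R, hR⟩ := (hΩb.union hOb).subset_ball 0
  set p := (d : ℝ) - (1 - s) with hp
  set g : EuclideanSpace ℝ (Fin d) → ℝ :=
    (Metric.ball 0 (2 * R)).indicator (fun z => (‖z‖ ^ p)⁻¹) with hg
  have hgi : Integrable g := by
    rw [hg, integrable_indicator_iff Metric.isOpen_ball.measurableSet]
    exact kern_integrableOn_ball d hd p (by linarith [hs.2]) _
  have hg0 : ∀ z, 0 ≤ g z := fun z => Set.indicator_nonneg (fun _ _ => by positivity) _
  set K := ∫ z, g z with hK
  have hK0 : 0 ≤ K := integral_nonneg hg0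
  set c := muS d s / p with hc
  refine ⟨|c| * (K + 1), by positivity, fun φ hφ hcs hsupp => ?_⟩
  have hφ2 : Integrable (fun y => (φ y) ^ 2) :=
    (hφ.pow 2).integrable_of_hasCompactSupport (by simpa [sq] using hcs.mul_left (f := φ))
  set F : EuclideanSpace ℝ (Fin d) → ℝ :=
    convolution (fun y => (φ y) ^ 2) g (ContinuousLinearMap.mul ℝ ℝ) volume with hF
  have hFi : Integrable F := hφ2.integrable_convolution _ hgi
  have hF0 : ∀ x, 0 ≤ F x := fun x => by
    rw [hF, convolution_def]
    exact integral_nonneg fun y => mul_nonneg (sq_nonneg _) (hg0 _)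
  have hFint : ∫ x, F x = (∫ y, (φ y) ^ 2) * K := by
    rw [hF, integral_convolution _ hφ2 hgi]; rfl
  obtain ⟨M, hM⟩ := hcs.exists_bound_of_continuous hφ
  have hpt : ∀ x ∈ O, (rieszPot d (1 - s) φ x) ^ 2 ≤ c ^ 2 * (K + 1) * F x := fun x hx => by
    have hgx : Integrable (fun y => g (x - y)) := hgi.comp_sub_left x
    have hKx : ∫ y, g (x - y) = K := integral_sub_left_eq_self g volume x
    have h1 : Integrable (fun y => φ y * g (x - y)) :=
      hgx.bdd_mul hφ.aestronglyMeasurable (Eventually.of_forall hM)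
    have h2 : Integrable (fun y => (φ y) ^ 2 * g (x - y)) := by
      refine hgx.bdd_mul (c := M ^ 2) (hφ.pow 2).aestronglyMeasurable (Eventually.of_forall fun y => ?_)
      rw [norm_pow]
      exact pow_le_pow_left₀ (norm_nonneg _) (hM y) 2
    set A := ∫ y, φ y * g (x - y) with hA
    have hr : rieszPot d (1 - s) φ x = c * A := by
      rw [rieszPot, sub_sub_cancel, hA, hc]
      congr 1
      refine integral_congr_ae (Eventually.of_forall fun y => ?_)
      by_cases hy : φ y = 0
      · simp [hy]
      · have hyΩ : y ∈ Ω := hsupp (subset_tsupport _ hy)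
        have hy1 := hR (Or.inl hyΩ)
        have hx1 := hR (Or.inr hx)
        rw [mem_ball_zero_iff] at hy1 hx1
        have hmem : x - y ∈ Metric.ball (0 : EuclideanSpace ℝ (Fin d)) (2 * R) := by
          rw [mem_ball_zero_iff]
          have := norm_sub_le x y
          linarith
        simp only [hg, Set.indicator_of_mem hmem]
        rfl
    have hFx : F x = ∫ y, (φ y) ^ 2 * g (x - y) := rfl
    have hpos : 0 ≤ ∫ y, ((K + 1) * φ y - A) ^ 2 * g (x - y) :=
      integral_nonneg fun y => mul_nonneg (sq_nonneg _) (hg0 _)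
    have hexp : ∫ y, ((K + 1) * φ y - A) ^ 2 * g (x - y) =
        (K + 1) ^ 2 * F x - 2 * (K + 1) * A * A + A ^ 2 * K := by
      rw [hFx]
      have e : ∀ y, ((K + 1) * φ y - A) ^ 2 * g (x - y) =
          ((K + 1) ^ 2 * ((φ y) ^ 2 * g (x - y)) - (2 * (K + 1) * A) * (φ y * g (x - y))) +
            A ^ 2 * g (x - y) := fun y => by ring
      simp_rw [e]
      have h12 : Integrable (fun y => (K + 1) ^ 2 * ((φ y) ^ 2 * g (x - y)) -
          (2 * (K + 1) * A) * (φ y * g (x - y))) := (h2.const_mul _).sub (h1.const_mul _)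
      rw [integral_add h12 (hgx.const_mul _),
        integral_sub (h2.const_mul _) (h1.const_mul _), integral_const_mul, integral_const_mul,
        integral_const_mul, hKx]
    have hA2 : A ^ 2 ≤ (K + 1) * F x := by
      rw [hexp] at hpos
      have h5 : 0 ≤ (K + 1) * ((K + 1) * F x - A ^ 2) := by nlinarith [sq_nonneg A]
      have := nonneg_of_mul_nonneg_right h5 (by linarith)
      linarith
    rw [hr, mul_pow, mul_assoc]
    gcongr
  have hφ0 : 0 ≤ ∫ y, (φ y) ^ 2 := integral_nonneg fun y => sq_nonneg _
  calc ∫ x in O, (rieszPot d (1 - s) φ x) ^ 2 ≤ ∫ x in O, c ^ 2 * (K + 1) * F x := by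
        refine integral_mono_of_nonneg (Eventually.of_forall fun x => sq_nonneg _)
          (hFi.const_mul _).integrableOn ?_
        filter_upwards [ae_restrict_mem hOo.measurableSet] with x hx using hpt x hx
    _ ≤ ∫ x, c ^ 2 * (K + 1) * F x :=
        setIntegral_le_integral (hFi.const_mul _)
          (Eventually.of_forall fun x => mul_nonneg (by positivity) (hF0 x))
    _ = c ^ 2 * (K + 1) * ((∫ y, (φ y) ^ 2) * K) := by rw [integral_const_mul, hFint]
    _ ≤ _ := by
        rw [mul_pow, sq_abs]
        have : 0 ≤ c ^ 2 * (K + 1) * ∫ y, (φ y) ^ 2 := by positivity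
        nlinarith

/-- Continuity of the Riesz potential `I_{1-s} : H^s_0(Ω) → H^1_loc(ℝ^d)`, stated on
the dense subspace `C_c^∞(Ω)`. -/
theorem stmt3 (d : ℕ) (hd : 1 ≤ d) (s : ℝ) (hs : s ∈ Set.Ioo (0 : ℝ) 1)
    (Ω O : Set (EuclideanSpace ℝ (Fin d)))
    (hΩo : IsOpen Ω) (hΩb : Bornology.IsBounded Ω)
    (hOo : IsOpen O) (hOb : Bornology.IsBounded O) :
    ∃ C : ℝ, 0 < C ∧
      ∀ φ : EuclideanSpace ℝ (Fin d) → ℝ,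
        ContDiff ℝ (⊤ : ℕ∞) φ → HasCompactSupport φ → tsupport φ ⊆ Ω →
        (∫ x in O, (rieszPot d (1 - s) φ x) ^ 2) ^ ((1 : ℝ) / 2) +
            (∫ x in O, ‖gradient (rieszPot d (1 - s) φ) x‖ ^ 2) ^ ((1 : ℝ) / 2) ≤
          C * ((∫ x, (φ x) ^ 2) ^ ((1 : ℝ) / 2) +
            (∫ x, ‖fracGrad d s φ x‖ ^ 2) ^ ((1 : ℝ) / 2)) := by
  obtain ⟨C, hC0, hC⟩ := rieszPot_L2 d hd s hs Ω O hΩb hOo hOb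
  refine ⟨C + 1, by linarith, fun φ hφ hc hsupp => ?_⟩
  have hφ1 : ContDiff ℝ 1 φ := hφ.of_le (by exact_mod_cast le_top)
  have h1 := hC φ hφ.continuous hc hsupp
  have h2 : ∫ x in O, ‖gradient (rieszPot d (1 - s) φ) x‖ ^ 2 ≤ ∫ x, ‖fracGrad d s φ x‖ ^ 2 := by
    simp_rw [rieszPot_gradient d hd s hs φ hφ1 hc]
    exact setIntegral_le_integral (fracGrad_sq_integrable d hd s hs φ hφ1 hc)
      (Eventually.of_forall fun x => sq_nonneg _)
  have hn1 : 0 ≤ ∫ x in O, (rieszPot d (1 - s) φ x) ^ 2 := integral_nonneg fun x => sq_nonneg _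
  have hn2 : 0 ≤ ∫ x in O, ‖gradient (rieszPot d (1 - s) φ) x‖ ^ 2 :=
    integral_nonneg fun x => sq_nonneg _
  have hn3 : 0 ≤ ∫ x, (φ x) ^ 2 := integral_nonneg fun x => sq_nonneg _
  have k1 := Real.rpow_le_rpow hn1 h1 (by norm_num : (0 : ℝ) ≤ 1 / 2)
  have k2 := Real.rpow_le_rpow hn2 h2 (by norm_num : (0 : ℝ) ≤ 1 / 2)
  rw [Real.mul_rpow (sq_nonneg C) hn3, ← Real.sqrt_eq_rpow (C ^ 2), Real.sqrt_sq hC0] at k1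
  have p1 : 0 ≤ (∫ x, (φ x) ^ 2) ^ ((1 : ℝ) / 2) := Real.rpow_nonneg hn3 _
  have p2 : 0 ≤ (∫ x, ‖fracGrad d s φ x‖ ^ 2) ^ ((1 : ℝ) / 2) :=
    Real.rpow_nonneg (integral_nonneg fun x => sq_nonneg _) _
  nlinarith

end
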